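/- Let V be a finite set with metric d and a partition into clusters that is consistent with d: for every cluster C, every y ∉ C, and every partition C = C₁ ∪ C₂ into nonempty disjoint parts, d(C₁, C₂) < d(y, C). Then for any two points x_i, x_j in the same cluster C and any point x_k outside C, the transitive distance satisfies D(x_i, x_j) ≤ min{D(x_i, x_k), D(x_j, x_k)}. -/

import Mathlib

/-!
Any path leaving a cluster `C` has an edge `a b` with `a ∈ C` and `b ∉ C`, so its cost is at least
`r = d(b, C)` (`exists_exit_edge`). Consistency says that every splitting of `C` into two nonempty
parts is bridged by a pair of points at distance less than `r`; hence the set of points of `C`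
that reach a given `y ∈ C` by a path of cost at most `r` cannot be a proper subset of `C`
(`exists_path_of_bridged`). Thus any two points of `C` are joined by a path at most as
expensive as any path leaving `C`.
-/

open scoped Classical

/-- The cost of a path (list of vertices): the maximum distance between
consecutive vertices (0 for trivial paths). -/
noncomputable def pathCost {V : Type*} [MetricSpace V] : List V → ℝ
  | [] => 0
  | [_] => 0
  | a :: b :: t => max (dist a b) (pathCost (b :: t))

/-- `l` is a path from `x` to `y`: a nonempty list starting at `x` and ending at `y`. -/
def IsPathList {V : Type*} (x y : V) (l : List V) : Prop :=
  l.head? = some x ∧ l.getLast? = some y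

/-- The transitive distance: the minimum (infimum) over all paths from `x` to `y`
of the maximum edge length along the path. -/
noncomputable def transDist {V : Type*} [MetricSpace V] (x y : V) : ℝ :=
  sInf {c | ∃ l : List V, IsPathList x y l ∧ pathCost l = c}

/-- The distance between two finite sets: the minimum pairwise distance. -/
noncomputable def finsetDist {V : Type*} [MetricSpace V] (A B : Finset V) : ℝ :=
  sInf {r | ∃ a ∈ A, ∃ b ∈ B, dist a b = r}

/-- `clusters` is a partition of `V` into clusters. -/
def IsClustering {V : Type*} (clusters : Finset (Finset V)) : Prop :=
  ∀ x : V, ∃! C, C ∈ clusters ∧ x ∈ C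

/-- A clustering is consistent with the metric if for every cluster `C`, every
point `y` outside `C`, and every partition of `C` into two nonempty parts `C₁`
and `C₂`, the distance between `C₁` and `C₂` is strictly smaller than the
distance from `y` to `C`. -/
def Consistent {V : Type*} [MetricSpace V] (clusters : Finset (Finset V)) : Prop :=
  ∀ C ∈ clusters, ∀ y : V, y ∉ C → ∀ C1 C2 : Finset V,
    C1.Nonempty → C2.Nonempty → Disjoint C1 C2 → C1 ∪ C2 = C →
    finsetDist C1 C2 < finsetDist {y} C

lemma pathCost_nonneg {V : Type*} [MetricSpace V] : ∀ l : List V, 0 ≤ pathCost l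
  | [] => le_rfl
  | [_] => le_rfl
  | _ :: _ :: _ => le_max_of_le_left dist_nonneg

lemma transDist_le_pathCost {V : Type*} [MetricSpace V] {x y : V} {l : List V}
    (hl : IsPathList x y l) : transDist x y ≤ pathCost l := by
  refine csInf_le ⟨0, ?_⟩ ⟨l, hl, rfl⟩
  rintro _ ⟨l', -, rfl⟩
  exact pathCost_nonneg l'

lemma finsetDist_le_dist {V : Type*} [MetricSpace V] {A B : Finset V} {a b : V}
    (ha : a ∈ A) (hb : b ∈ B) : finsetDist A B ≤ dist a b := by
  refine csInf_le ⟨0, ?_⟩ ⟨a, ha, b, hb, rfl⟩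
  rintro _ ⟨_, -, _, -, rfl⟩
  exact dist_nonneg

lemma exists_exit_edge {V : Type*} [MetricSpace V] (C : Finset V) {k : V} (hk : k ∉ C) :
    ∀ (l : List V) (w : V), w ∈ C → IsPathList w k l →
      ∃ a ∈ C, ∃ b ∉ C, dist a b ≤ pathCost l
  | [], _, _, h => by simp [IsPathList] at h
  | [u], w, hw, h => by
    obtain ⟨h1, h2⟩ := h
    simp only [List.head?_cons, List.getLast?_singleton, Option.some.injEq] at h1 h2
    exact absurd (h1 ▸ hw) (h2 ▸ hk)
  | u :: v :: t, w, hw, h => by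
    obtain ⟨h1, h2⟩ := h
    simp only [List.head?_cons, Option.some.injEq] at h1
    subst h1
    by_cases hv : v ∈ C
    · obtain ⟨a, ha, b, hb, hab⟩ := exists_exit_edge C hk (v :: t) v hv
        ⟨rfl, by rwa [List.getLast?_cons_cons] at h2⟩
      exact ⟨a, ha, b, hb, hab.trans (le_max_right _ _)⟩
    · exact ⟨u, hw, v, hv, le_max_left _ _⟩

/-- If every splitting of `C` into two nonempty parts is bridged at distance less than `r`, then
any two points of `C` are joined by a path of cost at most `r`. -/
lemma exists_path_of_bridged {V : Type*} [MetricSpace V] {C : Finset V} {r : ℝ} (hr : 0 ≤ r)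
    (hC : ∀ C1 C2 : Finset V, C1.Nonempty → C2.Nonempty → Disjoint C1 C2 → C1 ∪ C2 = C →
      finsetDist C1 C2 < r)
    {x y : V} (hx : x ∈ C) (hy : y ∈ C) : ∃ l, IsPathList x y l ∧ pathCost l ≤ r := by
  by_contra hxy
  let P : V → Prop := fun z => ∃ l, IsPathList z y l ∧ pathCost l ≤ r
  have hyP : P y := ⟨[y], ⟨rfl, rfl⟩, hr⟩
  have hlt : finsetDist (C.filter fun z => ¬ P z) (C.filter P) < r := by
    refine hC _ _ ⟨x, Finset.mem_filter.2 ⟨hx, hxy⟩⟩ ⟨y, Finset.mem_filter.2 ⟨hy, hyP⟩⟩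
      (Finset.disjoint_filter_filter_not C C P).symm ?_
    rw [Finset.union_comm]
    exact Finset.filter_union_filter_not_eq P C
  obtain ⟨_, ⟨a, ha, b, hb, rfl⟩, hab⟩ := exists_lt_of_csInf_lt
    (s := {r | ∃ a ∈ C.filter fun z => ¬ P z, ∃ b ∈ C.filter P, dist a b = r})
    ⟨_, x, Finset.mem_filter.2 ⟨hx, hxy⟩, y, Finset.mem_filter.2 ⟨hy, hyP⟩, rfl⟩ hlt
  obtain ⟨l, ⟨hl1, hl2⟩, hl⟩ := (Finset.mem_filter.1 hb).2
  -- The bridge `a b` followed by a path from `b` to `y` contradicts the choice of `a`.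
  refine (Finset.mem_filter.1 ha).2 ⟨a :: l, ⟨rfl, ?_⟩, ?_⟩
  · cases l with
    | nil => simp at hl1
    | cons c t => rwa [List.getLast?_cons_cons]
  · cases l with
    | nil => simp at hl1
    | cons c t =>
      simp only [List.head?_cons, Option.some.injEq] at hl1
      subst hl1
      exact max_le hab.le hl

/-- Transitive distances inside `C` are bounded by those from any point of `C` to the outside;
the three points of `C` are arbitrary, which covers both terms of the minimum. -/
lemma transDist_le_transDist_outside {V : Type*} [MetricSpace V] {clusters : Finset (Finset V)}
    (hcons : Consistent clusters) {C : Finset V} (hC : C ∈ clusters) {x y w k : V}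
    (hx : x ∈ C) (hy : y ∈ C) (hw : w ∈ C) (hk : k ∉ C) :
    transDist x y ≤ transDist w k := by
  refine le_csInf ⟨_, [w, k], ⟨rfl, rfl⟩, rfl⟩ ?_
  rintro _ ⟨l, hl, rfl⟩
  obtain ⟨a, ha, b, hb, hab⟩ := exists_exit_edge C hk l w hw hl
  have hba : finsetDist {b} C ≤ dist a b := by
    rw [dist_comm]
    exact finsetDist_le_dist (Finset.mem_singleton_self b) ha
  have hr : 0 ≤ finsetDist {b} C := by
    refine Real.sInf_nonneg ?_
    rintro _ ⟨_, -, _, -, rfl⟩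
    exact dist_nonneg
  obtain ⟨p, hp, hpr⟩ := exists_path_of_bridged hr (hcons C hC b hb) hx hy
  exact (transDist_le_pathCost hp).trans (hpr.trans (hba.trans hab))

/-- For a consistent clustering, the transitive distance between two points of
the same cluster is at most the minimum of their transitive distances to any
point outside the cluster. -/
theorem transDist_intra_le_min_inter {V : Type*} [Fintype V] [MetricSpace V]
    (clusters : Finset (Finset V)) (hpart : IsClustering clusters)
    (hsize : ∀ C ∈ clusters, 2 ≤ C.card)
    (hcons : Consistent clusters)
    (C : Finset V) (hC : C ∈ clusters)
    (xi xj xk : V) (hi : xi ∈ C) (hj : xj ∈ C) (hk : xk ∉ C) :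
    transDist xi xj ≤ min (transDist xi xk) (transDist xj xk) := by
  exact le_min (transDist_le_transDist_outside hcons hC hi hj hi hk)
    (transDist_le_transDist_outside hcons hC hi hj hj hk)
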